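/- arXiv:2206.15287 — 2 statements merged into one kernel-verified Lean document; each statement's English description precedes it below -/
import Mathlib

section
/- Let ρ ∈ M_m(ℂ) and σ ∈ M_n(ℂ) be faithful density matrices, and let E : M_m(ℂ) → M_n(ℂ) be a linear map with E(1) = 1, Tr(σ E(a)) = Tr(ρ a) for all a ∈ M_m(ℂ), and satisfying the Schwarz inequality: E(a*a) − E(a)*E(a) is positive semidefinite for every a ∈ M_m(ℂ). Let k_1,…,k_d ∈ M_m(ℂ) and l_1,…,l_d ∈ M_n(ℂ). If Σ_{i=1}^d [ Tr(ρ k_i* k_i) + Tr(σ l_i* l_i) − Tr(σ E(k_i)* l_i) − Tr(σ l_i* E(k_i)) ] = 0, then E(k_i) = l_i and E(k_i* k_i) = E(k_i)* E(k_i) for every i = 1,…,d. -/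
open Matrix
open scoped ComplexOrder

/-!
Compatibility of `E` with the two functionals splits the cost of a pair `(k, l)` as
`ψ (E (k⋆k) - (E k)⋆(E k)) + ψ ((E k - l)⋆(E k - l))`. The Schwarz inequality makes the first
term nonnegative, the second is visibly nonnegative, and faithfulness of `ψ` turns the vanishing of
the sum into the vanishing of both arguments.
-/

section FaithfulFunctional

variable {R B : Type*} [AddCommMonoid R] [PartialOrder R] [NonUnitalSemiring B] [StarRing B]

/-- A faithful positive functional on a `*`-semiring: `ψ (b⋆b) ≥ 0`, with equality only for `b = 0`.
It is encoded as an additive map, so that one notion covers real- and complex-valued functionals. -/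
def IsFaithfulPositive (ψ : B →+ R) : Prop :=
  ∀ b, b ≠ 0 → 0 < ψ (star b * b)

namespace IsFaithfulPositive

variable {ψ : B →+ R}

theorem map_star_mul_self_eq_zero_iff (hψ : IsFaithfulPositive ψ) {b : B} :
    ψ (star b * b) = 0 ↔ b = 0 := by
  refine ⟨fun h => ?_, by rintro rfl; simp⟩
  by_contra hb
  exact (hψ b hb).ne' h

variable [IsOrderedAddMonoid R] [PartialOrder B] [StarOrderedRing B]

theorem eq_zero_or_map_pos (hψ : IsFaithfulPositive ψ) {b : B} (hb : 0 ≤ b) :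
    b = 0 ∨ 0 < ψ b := by
  rw [StarOrderedRing.nonneg_iff] at hb
  induction hb using AddSubmonoid.closure_induction with
  | mem _ h =>
    obtain ⟨s, rfl⟩ := h
    obtain rfl | hs := eq_or_ne s 0
    · simp
    · exact .inr (hψ s hs)
  | zero => exact .inl rfl
  | add x y _ _ hx hy =>
    obtain rfl | hx := hx
    · simpa using hy
    obtain rfl | hy := hy
    · simpa using Or.inr hx
    · rw [map_add]
      exact .inr (hx.trans_le (le_add_of_nonneg_right hy.le))

theorem map_nonneg (hψ : IsFaithfulPositive ψ) {b : B} (hb : 0 ≤ b) : 0 ≤ ψ b := by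
  obtain rfl | h := hψ.eq_zero_or_map_pos hb
  · simp
  · exact h.le

theorem map_eq_zero_iff (hψ : IsFaithfulPositive ψ) {b : B} (hb : 0 ≤ b) : ψ b = 0 ↔ b = 0 :=
  ⟨fun h => (hψ.eq_zero_or_map_pos hb).resolve_right h.not_gt, by rintro rfl; simp⟩

end IsFaithfulPositive

end FaithfulFunctional

section TraceFunctional

variable {n R : Type*} [Fintype n]

/-- The functional `a ↦ Tr (σ a)`, the state with density matrix `σ` when `σ` is positive of
trace one, bundled as an additive map so that `IsFaithfulPositive` applies to it. -/
def traceMulLeft [NonUnitalNonAssocSemiring R] (σ : Matrix n n R) : Matrix n n R →+ R :=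
  (traceAddMonoidHom n R).comp (AddMonoidHom.mulLeft σ)

theorem isFaithfulPositive_traceMulLeft [CommRing R] [StarRing R] [PartialOrder R]
    [StarOrderedRing R] {σ : Matrix n n R} (hσ : σ.PosDef) :
    IsFaithfulPositive (traceMulLeft σ) := by
  intro b hb
  obtain ⟨i, hi⟩ : ∃ i, b i ≠ 0 := Function.ne_iff.mp hb
  have htrace : traceMulLeft σ (star b * b) = (b * σ * bᴴ).trace := by
    change (σ * (bᴴ * b)).trace = _
    rw [← mul_assoc, trace_mul_cycle]
  have hdiag : 0 < (b * σ * bᴴ) i i := by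
    have h := hσ.dotProduct_mulVec_pos (star_ne_zero.mpr hi)
    rw [star_star, dotProduct_mulVec] at h
    exact h
  rw [htrace]
  exact Finset.sum_pos' (fun j _ => (hσ.posSemidef.mul_mul_conjTranspose_same b).diag_nonneg)
    ⟨i, Finset.mem_univ i, hdiag⟩

end TraceFunctional

section TransportCost

variable {ι R A B : Type*} [AddCommGroup R] [Mul A] [Star A] [NonUnitalRing B] [StarRing B]
  {φ : A → R} {ψ : B →+ R} {E : A → B}

/-- The cost of transporting the coordinate `k` to the coordinate `l` along `E`, where `φ` and `ψ`
are the states on the source and on the target. The total cost of a transport plan is the sum of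
this quantity over a family of coordinates. -/
def transportCost (φ : A → R) (ψ : B →+ R) (E : A → B) (k : A) (l : B) : R :=
  φ (star k * k) + ψ (star l * l) - ψ (star (E k) * l) - ψ (star l * E k)

theorem transportCost_eq_add (hφ : ∀ a, ψ (E a) = φ a) (k : A) (l : B) :
    transportCost φ ψ E k l =
      ψ (E (star k * k) - star (E k) * E k) + ψ (star (E k - l) * (E k - l)) := by
  simp only [transportCost, ← hφ, star_sub, mul_sub, sub_mul, map_sub]
  abel

variable [PartialOrder R] [IsOrderedAddMonoid R] [PartialOrder B] [StarOrderedRing B]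

theorem transportCost_nonneg (hψ : IsFaithfulPositive ψ) (hφ : ∀ a, ψ (E a) = φ a)
    {k : A} (hk : star (E k) * E k ≤ E (star k * k)) (l : B) :
    0 ≤ transportCost φ ψ E k l := by
  rw [transportCost_eq_add hφ]
  exact add_nonneg (hψ.map_nonneg (sub_nonneg.mpr hk)) (hψ.map_nonneg (star_mul_self_nonneg _))

theorem transportCost_eq_zero_iff (hψ : IsFaithfulPositive ψ) (hφ : ∀ a, ψ (E a) = φ a)
    {k : A} (hk : star (E k) * E k ≤ E (star k * k)) {l : B} :
    transportCost φ ψ E k l = 0 ↔ E k = l ∧ E (star k * k) = star (E k) * E k := by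
  have hgap := sub_nonneg.mpr hk
  rw [transportCost_eq_add hφ,
    add_eq_zero_iff_of_nonneg (hψ.map_nonneg hgap) (hψ.map_nonneg (star_mul_self_nonneg _)),
    hψ.map_eq_zero_iff hgap, hψ.map_star_mul_self_eq_zero_iff, sub_eq_zero, sub_eq_zero, and_comm]

theorem stmt_3_general [Fintype ι] (hψ : IsFaithfulPositive ψ) (hφ : ∀ a, ψ (E a) = φ a)
    (hschwarz : ∀ a, star (E a) * E a ≤ E (star a * a)) (k : ι → A) (l : ι → B) :
    ∑ i, transportCost φ ψ E (k i) (l i) = 0 ↔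
      ∀ i, E (k i) = l i ∧ E (star (k i) * k i) = star (E (k i)) * E (k i) := by
  rw [Finset.sum_eq_zero_iff_of_nonneg fun i _ =>
    transportCost_nonneg hψ hφ (hschwarz (k i)) (l i)]
  simp only [Finset.mem_univ, true_imp_iff, transportCost_eq_zero_iff hψ hφ (hschwarz _)]

end TransportCost

/-- If a unital, trace-compatible linear map E satisfying the Schwarz
inequality has total transport cost zero relative to coordinates k and l, then
E(k_i) = l_i and E(k_i* k_i) = E(k_i)* E(k_i) for every i. -/
theorem stmt_3 {m n d : ℕ}
    (ρ : Matrix (Fin m) (Fin m) ℂ) (σ : Matrix (Fin n) (Fin n) ℂ)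
    (hρ : ρ.PosDef) (hρtr : ρ.trace = 1)
    (hσ : σ.PosDef) (hσtr : σ.trace = 1)
    (E : Matrix (Fin m) (Fin m) ℂ →ₗ[ℂ] Matrix (Fin n) (Fin n) ℂ)
    (hunital : E 1 = 1)
    (htr : ∀ a, (σ * E a).trace = (ρ * a).trace)
    (hschwarz : ∀ a, (E ((aᴴ) * a) - (E a)ᴴ * E a).PosSemidef)
    (k : Fin d → Matrix (Fin m) (Fin m) ℂ) (l : Fin d → Matrix (Fin n) (Fin n) ℂ)
    (hcost : ∑ i, ((ρ * ((k i)ᴴ * k i)).trace + (σ * ((l i)ᴴ * l i)).trace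
        - (σ * ((E (k i))ᴴ * l i)).trace - (σ * ((l i)ᴴ * E (k i))).trace) = 0) :
    ∀ i, E (k i) = l i ∧ E ((k i)ᴴ * k i) = (E (k i))ᴴ * E (k i) := by
  open scoped MatrixOrder in
  exact (stmt_3_general (φ := traceMulLeft ρ) (isFaithfulPositive_traceMulLeft hσ) htr
    hschwarz k l).mp hcost
end

section
/- Let λ ∈ [0,1], η, φ ∈ ℝ, and for θ ∈ ℝ let U_θ ∈ M_2(ℂ) be the diagonal matrix diag(1, e^{iθ}). For X ∈ M_2(ℂ) set α_*(X) = λ U_η X U_η* + (1−λ) U_φ X U_φ*, and for X, Y ∈ M_2(ℂ) set V_{XY} = Tr(α_*(X) Y) − Tr(X Y). Then for all density matrices X and Y in M_2(ℂ) (Hermitian, positive semidefinite, trace one): V_{XY} = V_{YX} if and only if λ sin η + (1−λ) sin φ = 0 or Im(X_{21} Y_{12}) = 0, where X_{21} denotes the (2,1) entry of X and Y_{12} the (1,2) entry of Y. -/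
open Matrix
open scoped ComplexOrder

/-- The unitary U_θ = diag(1, e^{iθ}). -/
noncomputable def Udiag (θ : ℝ) : Matrix (Fin 2) (Fin 2) ℂ :=
  Matrix.diagonal ![1, Complex.exp (θ * Complex.I)]

/-- The Schrödinger-picture dynamics α_*(X) = λ U_η X U_η* + (1−λ) U_φ X U_φ*. -/
noncomputable def alphaStar (lam η φ : ℝ) (X : Matrix (Fin 2) (Fin 2) ℂ) :
    Matrix (Fin 2) (Fin 2) ℂ :=
  (lam : ℂ) • (Udiag η * X * (Udiag η)ᴴ) + ((1 - lam : ℝ) : ℂ) • (Udiag φ * X * (Udiag φ)ᴴ)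

/-- The probability flow V_{XY} = Tr(α_*(X) Y) − Tr(X Y). -/
noncomputable def Vflow (lam η φ : ℝ) (X Y : Matrix (Fin 2) (Fin 2) ℂ) : ℂ :=
  (alphaStar lam η φ X * Y).trace - (X * Y).trace

/-
The difference `V_{XY} - V_{YX}` factors as
`2i (λ sin η + (1 - λ) sin φ) (X₂₁ Y₁₂ - X₁₂ Y₂₁)`: the terms `Tr(XY)` and the diagonal entries
cancel, and each conjugation by `U_θ` contributes `e^{iθ} - e^{-iθ} = 2i sin θ`. For Hermitian
matrices `X₁₂ Y₂₁` is the complex conjugate of `X₂₁ Y₁₂`, so the last factor vanishes exactly when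
`Im(X₂₁ Y₁₂) = 0`.
-/

section Diagonal

variable {n R : Type*} [Fintype n] [DecidableEq n]

theorem trace_diagonal_conjugate_mul [NonUnitalCommSemiring R] [StarRing R]
    (d : n → R) (X Y : Matrix n n R) :
    (diagonal d * X * (diagonal d)ᴴ * Y).trace =
      ∑ i, ∑ j, d i * star (d j) * (X i j * Y j i) := by
  simp only [diagonal_conjTranspose, trace, diag_apply, mul_apply (N := Y), mul_diagonal,
    diagonal_mul, Pi.star_apply]
  exact Finset.sum_congr rfl fun i _ ↦ Finset.sum_congr rfl fun j _ ↦ by ac_rfl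

theorem trace_diagonal_conjugate_mul_sub_swap [NonUnitalCommRing R] [StarRing R]
    (d : n → R) (X Y : Matrix n n R) :
    (diagonal d * X * (diagonal d)ᴴ * Y).trace - (diagonal d * Y * (diagonal d)ᴴ * X).trace =
      ∑ i, ∑ j, (d i * star (d j) - d j * star (d i)) * (X i j * Y j i) := by
  rw [trace_diagonal_conjugate_mul, trace_diagonal_conjugate_mul]
  conv_lhs => rw [Finset.sum_comm (f := fun i j ↦ d i * star (d j) * (Y i j * X j i))]
  simp only [← Finset.sum_sub_distrib, sub_mul, mul_comm (X _ _)]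

end Diagonal

theorem hermitian_apply_mul_apply_eq_swap_iff {n : Type*} {X Y : Matrix n n ℂ}
    (hX : X.IsHermitian) (hY : Y.IsHermitian) (i j : n) :
    X i j * Y j i = X j i * Y i j ↔ (X i j * Y j i).im = 0 := by
  rw [← hX.apply j i, ← hY.apply i j, ← star_mul', eq_comm]
  exact Complex.conj_eq_iff_im

theorem exp_ofReal_mul_I_sub_star (θ : ℝ) :
    Complex.exp (θ * Complex.I) - star (Complex.exp (θ * Complex.I)) =
      2 * Complex.I * Real.sin θ := by
  rw [← starRingEnd_apply, Complex.sub_conj, Complex.exp_ofReal_mul_I_im]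
  push_cast
  ring

section Flow

variable (θ lam η φ : ℝ) (X Y : Matrix (Fin 2) (Fin 2) ℂ)

theorem trace_Udiag_conjugate_mul_sub_swap :
    (Udiag θ * X * (Udiag θ)ᴴ * Y).trace - (Udiag θ * Y * (Udiag θ)ᴴ * X).trace =
      2 * Complex.I * Real.sin θ * (X 1 0 * Y 0 1 - X 0 1 * Y 1 0) := by
  rw [Udiag, trace_diagonal_conjugate_mul_sub_swap, ← exp_ofReal_mul_I_sub_star]
  simp only [Fin.sum_univ_two, cons_val_zero, cons_val_one, star_one]
  ring

theorem trace_alphaStar_mul :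
    (alphaStar lam η φ X * Y).trace =
      lam * (Udiag η * X * (Udiag η)ᴴ * Y).trace +
        (1 - lam) * (Udiag φ * X * (Udiag φ)ᴴ * Y).trace := by
  simp only [alphaStar, add_mul, smul_mul_assoc, trace_add, trace_smul, smul_eq_mul,
    Complex.ofReal_sub, Complex.ofReal_one]

theorem Vflow_sub_Vflow_swap :
    Vflow lam η φ X Y - Vflow lam η φ Y X =
      2 * Complex.I * (lam * Real.sin η + (1 - lam) * Real.sin φ : ℝ) *
        (X 1 0 * Y 0 1 - X 0 1 * Y 1 0) := by
  rw [Vflow, Vflow, trace_mul_comm Y X, trace_alphaStar_mul, trace_alphaStar_mul]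
  simp only [Complex.ofReal_add, Complex.ofReal_mul, Complex.ofReal_sub, Complex.ofReal_one]
  linear_combination (lam : ℂ) * trace_Udiag_conjugate_mul_sub_swap η X Y +
    (1 - lam : ℂ) * trace_Udiag_conjugate_mul_sub_swap φ X Y

theorem Vflow_eq_Vflow_swap_iff :
    Vflow lam η φ X Y = Vflow lam η φ Y X ↔
      lam * Real.sin η + (1 - lam) * Real.sin φ = 0 ∨ X 1 0 * Y 0 1 = X 0 1 * Y 1 0 := by
  rw [← sub_eq_zero, Vflow_sub_Vflow_swap, mul_eq_zero, mul_eq_zero, Complex.ofReal_eq_zero,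
    sub_eq_zero, or_iff_right (mul_ne_zero two_ne_zero Complex.I_ne_zero)]

end Flow

theorem stmt_14_general (lam η φ : ℝ) {X Y : Matrix (Fin 2) (Fin 2) ℂ}
    (hX : X.IsHermitian) (hY : Y.IsHermitian) :
    Vflow lam η φ X Y = Vflow lam η φ Y X ↔
      lam * Real.sin η + (1 - lam) * Real.sin φ = 0 ∨ (X 1 0 * Y 0 1).im = 0 := by
  rw [Vflow_eq_Vflow_swap_iff, hermitian_apply_mul_apply_eq_swap_iff hX hY]

/-- For density matrices X, Y in M_2(ℂ), V_{XY} = V_{YX} iff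
λ sin η + (1−λ) sin φ = 0 or Im(X_{21} Y_{12}) = 0. -/
theorem stmt_14 (lam η φ : ℝ) (hlam0 : 0 ≤ lam) (hlam1 : lam ≤ 1)
    (X Y : Matrix (Fin 2) (Fin 2) ℂ)
    (hX : X.PosSemidef) (hXtr : X.trace = 1)
    (hY : Y.PosSemidef) (hYtr : Y.trace = 1) :
    Vflow lam η φ X Y = Vflow lam η φ Y X ↔
      lam * Real.sin η + (1 - lam) * Real.sin φ = 0 ∨ (X 1 0 * Y 0 1).im = 0 :=
  stmt_14_general lam η φ hX.isHermitian hY.isHermitian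
end
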